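/- arXiv:2407.20226 — 3 statements merged into one kernel-verified Lean document; each statement's English description precedes it below -/
import Mathlib

section
/- Let G be a finite connected simple graph, let s : E(G) → ℝ be a shift vector, fix an edge k ∈ E(G), and for t ∈ ℝ let s(k,t) be the shift vector agreeing with s except that its k-coordinate is s_k + t. Then for every edge j ∈ E(G) with j ≠ k, the function t ↦ P_{M_{s(k,t)}}(e_j ∈ T), the probability under the shifted-interval MST distribution M_{s(k,t)} that the minimum spanning tree contains the edge e_j, is weakly increasing in t. -/
/-!
As in Kruskal's algorithm, when the minimum spanning tree is unique it contains the edge `uv`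
exactly if `u` and `v` are not connected by edges lighter than `uv`. This event is preserved when
weights of other edges increase. Adding the difference of the shifts to the weights couples the
two distributions by such an increase, and the minimizer is almost surely unique because a tie
between two trees confines the weights to a proper subspace.
-/

open MeasureTheory SimpleGraph
open scoped Classical

noncomputable section

namespace RST

variable {V : Type*}

/-- The graph on `V` whose edge set is the finset `T`. -/
def spanGraph (T : Finset (Sym2 V)) : SimpleGraph V :=
  SimpleGraph.fromEdgeSet ↑T

/-- `T` is (the edge set of) a spanning tree of `G`. -/
def IsSpanningTree (G : SimpleGraph V) (T : Finset (Sym2 V)) : Prop :=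
  ↑T ⊆ G.edgeSet ∧ (spanGraph T).Connected ∧ (spanGraph T).IsAcyclic

/-- Total weight `∑_{e ∈ T} w e` of the tree `T`. -/
def treeWeight (G : SimpleGraph V) [Fintype V] (w : G.edgeSet → ℝ) (T : Finset (Sym2 V)) : ℝ :=
  ∑ e : G.edgeSet, if (e : Sym2 V) ∈ T then w e else 0

/-- The event that `T` is the unique minimum-weight spanning tree of `G`. -/
def mstEvent (G : SimpleGraph V) [Fintype V] (T : Finset (Sym2 V)) : Set (G.edgeSet → ℝ) :=
  {w | IsSpanningTree G T ∧ ∀ T' : Finset (Sym2 V), IsSpanningTree G T' → T' ≠ T →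
    treeWeight G w T < treeWeight G w T'}

/-- Shifted-interval product measure: each edge `e` independently gets a weight drawn
uniformly from `[s e, s e + 1]`. -/
def shiftMeasure (G : SimpleGraph V) [Fintype V] (s : G.edgeSet → ℝ) :
    Measure (G.edgeSet → ℝ) :=
  Measure.pi fun e => (volume : Measure ℝ).restrict (Set.Icc (s e) (s e + 1))

/-- `P_{M_s}(T)`: the probability under the shifted-interval MST distribution `M_s`
that `T` is the (unique) minimum-weight spanning tree. -/
def shiftedMstProb (G : SimpleGraph V) [Fintype V] (s : G.edgeSet → ℝ)
    (T : Finset (Sym2 V)) : ℝ :=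
  (shiftMeasure G s (mstEvent G T)).toReal


/-- The probability under `M_s` that the minimum spanning tree contains the edge `j`. -/
def edgeInclusionProb (G : SimpleGraph V) [Fintype V] (s : G.edgeSet → ℝ)
    (j : G.edgeSet) : ℝ :=
  (shiftMeasure G s {w | ∃ T : Finset (Sym2 V), IsSpanningTree G T ∧
    (∀ T' : Finset (Sym2 V), IsSpanningTree G T' → T' ≠ T →
      treeWeight G w T < treeWeight G w T') ∧ (j : Sym2 V) ∈ T}).toReal

section Graph

lemma reachable_of_forall_adj {H K : SimpleGraph V} (hHK : ∀ x y, H.Adj x y → K.Reachable x y)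
    {u v : V} (huv : H.Reachable u v) : K.Reachable u v := by
  obtain ⟨p⟩ := huv
  induction p with
  | nil => exact .rfl
  | cons hadj _ ih => exact (hHK _ _ hadj).trans ih

lemma not_reachable_deleteEdges_of_mem_edges {H : SimpleGraph V} (hH : H.IsAcyclic) {u v : V}
    {p : H.Walk u v} (hp : p.IsPath) {e : Sym2 V} (he : e ∈ p.edges) :
    ¬ (H.deleteEdges {e}).Reachable u v := by
  induction e with | _ a b
  rw [reachable_deleteEdges_iff_exists_walk]
  rintro ⟨q, hq⟩
  have hpq : p = q.bypass :=
    congrArg Subtype.val ((hH.subsingleton_path u v).elim ⟨p, hp⟩ ⟨q.bypass, q.bypass_isPath⟩)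
  exact hq (q.edges_bypass_subset_edges (hpq ▸ he))

lemma isTree_deleteEdges_sup_edge {H : SimpleGraph V} (hH : H.IsTree) {e : Sym2 V} {c d : V}
    (hcd : ¬ (H.deleteEdges {e}).Reachable c d) : (H.deleteEdges {e} ⊔ edge c d).IsTree := by
  set K := H.deleteEdges {e} ⊔ edge c d
  have hKacyclic : K.IsAcyclic :=
    (hH.isAcyclic.anti (deleteEdges_le _)).sup_edge_of_not_reachable hcd
  have := hH.connected.nonempty
  have hmax : Maximal IsAcyclic H := maximal_isAcyclic_iff_isTree.2 hH
  -- If some edge `ab` of `H` had its ends disconnected in `K`, then `K ⊔ edge a b` would still be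
  -- acyclic, against the maximality of `H`.
  refine ⟨⟨fun u v => reachable_of_forall_adj (fun a b hab => ?_) (hH.connected u v)⟩, hKacyclic⟩
  by_contra hKab
  have heab : s(a, b) = e := by
    by_contra hne
    exact hKab (Adj.reachable (Or.inl (by simp [hab, hne])))
  have hHK : H ≤ K ⊔ edge a b := by
    intro x y hxy
    by_cases hxye : s(x, y) = e
    · exact Or.inr ((adj_edge _ _).2 ⟨heab.trans hxye.symm, hxy.ne⟩)
    · exact Or.inl (Or.inl (by simp [hxy, hxye]))
  have hKH : K ⊔ edge a b ≤ H := hmax.le_of_ge (hKacyclic.sup_edge_of_not_reachable hKab) hHK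
  have hKcd : K.Adj c d := Or.inr ((adj_edge _ _).2 ⟨rfl, fun h => hcd (h ▸ .rfl)⟩)
  have hecd : s(c, d) = e := by
    by_contra hne
    exact hcd (Adj.reachable (by simp [hKH (Or.inl hKcd), hne]))
  have hKab' : K.Adj a b := by rwa [← mem_edgeSet, heab, ← hecd]
  exact hKab hKab'.reachable

end Graph

section SpanningTree

lemma spanGraph_erase (T : Finset (Sym2 V)) (e : Sym2 V) :
    spanGraph (T.erase e) = (spanGraph T).deleteEdges {e} := by
  simp [spanGraph]

lemma spanGraph_insert (T : Finset (Sym2 V)) (c d : V) :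
    spanGraph (insert s(c, d) T) = spanGraph T ⊔ edge c d := by
  simp [spanGraph, edge, ← fromEdgeSet_union]

lemma IsSpanningTree.insert_erase {G : SimpleGraph V} {T : Finset (Sym2 V)}
    (hT : IsSpanningTree G T) {e : Sym2 V} {c d : V} (hadj : G.Adj c d)
    (hcd : ¬ (spanGraph (T.erase e)).Reachable c d) :
    IsSpanningTree G (insert s(c, d) (T.erase e)) := by
  obtain ⟨hTG, hconn, hacyc⟩ := hT
  rw [spanGraph_erase] at hcd
  have htree := isTree_deleteEdges_sup_edge ⟨hconn, hacyc⟩ hcd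
  rw [← spanGraph_erase, ← spanGraph_insert] at htree
  refine ⟨?_, htree.connected, htree.isAcyclic⟩
  rw [Finset.coe_insert]
  exact Set.insert_subset hadj ((Finset.coe_subset.2 (T.erase_subset e)).trans hTG)

lemma exists_isSpanningTree [Finite V] {G : SimpleGraph V} (hG : G.Connected) :
    ∃ T, IsSpanningTree G T := by
  obtain ⟨H, hHG, hH⟩ := hG.exists_isTree_le
  refine ⟨(Set.toFinite H.edgeSet).toFinset, ?_⟩
  simpa [IsSpanningTree, spanGraph, hH.connected, hH.isAcyclic] using hHG

end SpanningTree

section Weight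

variable [Fintype V] {G : SimpleGraph V} {w : G.edgeSet → ℝ} {T : Finset (Sym2 V)}

lemma treeWeight_insert {e : G.edgeSet} (he : (e : Sym2 V) ∉ T) :
    treeWeight G w (insert (e : Sym2 V) T) = w e + treeWeight G w T := by
  unfold treeWeight
  rw [← Fintype.sum_ite_eq e w, ← Finset.sum_add_distrib]
  refine Finset.sum_congr rfl fun f _ => ?_
  by_cases hfe : e = f
  · subst hfe
    simp [he]
  · simp [hfe, Subtype.coe_inj, eq_comm]

lemma lt_of_not_reachable_erase (hw : w ∈ mstEvent G T) {e : G.edgeSet}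
    (he : (e : Sym2 V) ∈ T) {c d : V} (hcd : G.Adj c d) (hne : s(c, d) ≠ e)
    (hsep : ¬ (spanGraph (T.erase e)).Reachable c d) : w e < w ⟨s(c, d), hcd⟩ := by
  obtain ⟨hT, hmin⟩ := hw
  have hcdT : s(c, d) ∉ T.erase e := fun h =>
    hsep (Adj.reachable ((fromEdgeSet_adj _).2 ⟨h, hcd.ne⟩))
  have heS : (e : Sym2 V) ∉ insert s(c, d) (T.erase e) := by simp [hne.symm]
  have hlt := hmin _ (hT.insert_erase hcd hsep) (ne_of_mem_of_not_mem' he heS).symm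
  have hTe : treeWeight G w T = w e + treeWeight G w (T.erase e) := by
    rw [← treeWeight_insert (Finset.notMem_erase _ T), Finset.insert_erase he]
  rw [treeWeight_insert (e := ⟨s(c, d), hcd⟩) hcdT, hTe] at hlt
  exact lt_of_add_lt_add_right hlt

end Weight

/-- The subgraph of `G` formed by the edges of weight less than `c`, as it is when Kruskal's
algorithm reaches the edges of weight `c`. -/
def lighterGraph (G : SimpleGraph V) (w : G.edgeSet → ℝ) (c : ℝ) : SimpleGraph V :=
  fromEdgeSet ((↑) '' {e : G.edgeSet | w e < c})

section Kruskal

variable {G : SimpleGraph V} {w : G.edgeSet → ℝ}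

lemma lighterGraph_adj {c : ℝ} {x y : V} :
    (lighterGraph G w c).Adj x y ↔ ∃ h : G.Adj x y, w ⟨s(x, y), h⟩ < c := by
  simp only [lighterGraph, fromEdgeSet_adj, Set.mem_image, Set.mem_ofPred_eq]
  constructor
  · rintro ⟨⟨⟨_, h⟩, hlt, rfl⟩, -⟩
    exact ⟨h, hlt⟩
  · rintro ⟨h, hlt⟩
    exact ⟨⟨_, hlt, rfl⟩, h.ne⟩

lemma lighterGraph_le_lighterGraph {w' : G.edgeSet → ℝ} {j : G.edgeSet}
    (hj : w' j ≤ w j) (hle : ∀ e ≠ j, w e ≤ w' e) :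
    lighterGraph G w' (w' j) ≤ lighterGraph G w (w j) := by
  refine fromEdgeSet_mono (Set.image_mono fun e (he : w' e < w' j) => ?_)
  have hne : e ≠ j := ne_of_apply_ne w' he.ne
  exact (hle e hne).trans_lt (he.trans_le hj)

variable [Fintype V] {T : Finset (Sym2 V)}

lemma mem_iff_not_reachable_lighterGraph (hw : w ∈ mstEvent G T) {u v : V} (huv : G.Adj u v) :
    s(u, v) ∈ T ↔ ¬ (lighterGraph G w (w ⟨s(u, v), huv⟩)).Reachable u v := by
  obtain ⟨hTG, hconn, hacyc⟩ := hw.1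
  constructor
  · intro hmem hlight
    have hadj : (spanGraph T).Adj u v := (fromEdgeSet_adj _).2 ⟨hmem, huv.ne⟩
    have hsep : ¬ (spanGraph (T.erase s(u, v))).Reachable u v := by
      rw [spanGraph_erase]
      exact isBridge_iff.1 (isAcyclic_iff_forall_adj_isBridge.1 hacyc hadj)
    refine hsep (reachable_of_forall_adj (fun x y hxy => ?_) hlight)
    obtain ⟨hxyG, hlt⟩ := lighterGraph_adj.1 hxy
    by_contra hxysep
    refine hlt.not_gt (lt_of_not_reachable_erase hw (e := ⟨s(u, v), huv⟩) hmem hxyG ?_ hxysep)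
    intro h
    simp [h] at hlt
  · intro hlight
    by_contra hmem
    obtain ⟨p, hp⟩ := hconn.preconnected.exists_isPath u v
    refine hlight ⟨p.transfer _ fun e he => ?_⟩
    have heT : e ∈ T := by
      have hespan := p.edges_subset_edgeSet he
      rw [spanGraph, edgeSet_fromEdgeSet] at hespan
      exact hespan.1
    have hlt : w ⟨e, hTG heT⟩ < w ⟨s(u, v), huv⟩ := by
      refine lt_of_not_reachable_erase hw heT huv (fun h => hmem (h ▸ heT)) ?_
      rw [spanGraph_erase]
      exact not_reachable_deleteEdges_of_mem_edges hacyc hp he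
    rw [lighterGraph, edgeSet_fromEdgeSet]
    exact ⟨⟨_, hlt, rfl⟩, G.not_isDiag_of_mem_edgeSet (hTG heT)⟩

end Kruskal

section Measure

variable [Fintype V] {G : SimpleGraph V}

/-- `treeWeight` as a linear form in the edge weights, so that ties between edge sets are
subspaces of the space of weights. -/
def treeWeightLinear (G : SimpleGraph V) (T : Finset (Sym2 V)) :
    (G.edgeSet → ℝ) →ₗ[ℝ] ℝ :=
  ∑ e : G.edgeSet, if (e : Sym2 V) ∈ T then LinearMap.proj e else 0

lemma treeWeightLinear_apply (w : G.edgeSet → ℝ) (T : Finset (Sym2 V)) :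
    treeWeightLinear G T w = treeWeight G w T := by
  simp only [treeWeightLinear, treeWeight, LinearMap.sum_apply]
  refine Finset.sum_congr rfl fun e _ => ?_
  split_ifs <;> rfl

lemma treeWeight_single (e : G.edgeSet) (T : Finset (Sym2 V)) :
    treeWeight G (Pi.single e 1) T = if (e : Sym2 V) ∈ T then 1 else 0 := by
  rw [treeWeight, Finset.sum_eq_single e] <;> simp +contextual

lemma treeWeightLinear_injOn :
    Set.InjOn (treeWeightLinear G) {T : Finset (Sym2 V) | ↑T ⊆ G.edgeSet} := by
  intro T hT T' hT' h
  have hmem (e : G.edgeSet) : (e : Sym2 V) ∈ T ↔ (e : Sym2 V) ∈ T' := by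
    have heval := LinearMap.congr_fun h (Pi.single e 1)
    simp only [treeWeightLinear_apply, treeWeight_single] at heval
    split_ifs at heval <;> simp_all
  ext e
  exact ⟨fun he => (hmem ⟨e, hT he⟩).1 he, fun he => (hmem ⟨e, hT' he⟩).2 he⟩

lemma ae_treeWeight_ne {T T' : Finset (Sym2 V)} (hT : ↑T ⊆ G.edgeSet) (hT' : ↑T' ⊆ G.edgeSet)
    (hne : T ≠ T') : ∀ᵐ w : G.edgeSet → ℝ, treeWeight G w T ≠ treeWeight G w T' := by
  have hnull : volume (LinearMap.eqLocus (treeWeightLinear G T) (treeWeightLinear G T') :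
      Set (G.edgeSet → ℝ)) = 0 :=
    Measure.addHaar_submodule _ _ fun htop =>
      hne (treeWeightLinear_injOn hT hT' (LinearMap.eqLocus_eq_top.1 htop))
  simp only [ae_iff, ne_eq, not_not, ← treeWeightLinear_apply]
  exact hnull

lemma ae_injOn_treeWeight :
    ∀ᵐ w : G.edgeSet → ℝ, Set.InjOn (treeWeight G w) {T : Finset (Sym2 V) | ↑T ⊆ G.edgeSet} := by
  have hne (T T' : Finset (Sym2 V)) : ∀ᵐ w : G.edgeSet → ℝ,
      ↑T ⊆ G.edgeSet → ↑T' ⊆ G.edgeSet → treeWeight G w T = treeWeight G w T' → T = T' := by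
    by_cases h : ↑T ⊆ G.edgeSet ∧ ↑T' ⊆ G.edgeSet ∧ T ≠ T'
    · filter_upwards [ae_treeWeight_ne h.1 h.2.1 h.2.2] with w hw _ _ heq using absurd heq hw
    · exact .of_forall fun w hT hT' _ => by_contra fun hTT' => h ⟨hT, hT', hTT'⟩
  filter_upwards [ae_all_iff.2 fun T => ae_all_iff.2 (hne T)] with w hw T hT T' hT'
    using hw T T' hT hT'

lemma shiftMeasure_eq_restrict (s : G.edgeSet → ℝ) :
    shiftMeasure G s = volume.restrict (Set.univ.pi fun e => Set.Icc (s e) (s e + 1)) :=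
  (Measure.restrict_pi_pi _ _).symm

instance isFiniteMeasure_shiftMeasure (s : G.edgeSet → ℝ) : IsFiniteMeasure (shiftMeasure G s) := by
  unfold shiftMeasure
  infer_instance

lemma map_add_right_shiftMeasure (s d : G.edgeSet → ℝ) :
    (shiftMeasure G s).map (· + d) = shiftMeasure G (s + d) := by
  have hcoord (a c : ℝ) : (volume.restrict (Set.Icc a (a + 1))).map (· + c) =
      volume.restrict (Set.Icc (a + c) (a + c + 1)) := by
    simpa [add_sub_right_comm] using ((measurePreserving_add_right volume c).restrict_preimage
      (measurableSet_Icc (a := a + c) (b := a + c + 1))).map_eq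
  unfold shiftMeasure
  simp only [Pi.add_apply, ← hcoord]
  exact Measure.pi_map_pi fun e => (measurable_add_const (d e)).aemeasurable

lemma ae_exists_mem_mstEvent (hG : G.Connected) (s : G.edgeSet → ℝ) :
    ∀ᵐ w ∂shiftMeasure G s, ∃ T, w ∈ mstEvent G T := by
  rw [shiftMeasure_eq_restrict]
  filter_upwards [ae_restrict_of_ae ae_injOn_treeWeight] with w hw
  obtain ⟨T, hT, hmin⟩ := Set.exists_min_image {T | IsSpanningTree G T} (treeWeight G w)
    (Set.toFinite _) (exists_isSpanningTree hG)
  exact ⟨T, hT, fun T' hT' hne => (hmin T' hT').lt_of_ne fun heq =>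
    hne (hw hT'.1 hT.1 heq.symm)⟩

lemma edgeInclusionProb_eq_measureReal (hG : G.Connected) (s : G.edgeSet → ℝ) {u v : V}
    (huv : G.Adj u v) :
    edgeInclusionProb G s ⟨s(u, v), huv⟩ = (shiftMeasure G s).real
      {w | ¬ (lighterGraph G w (w ⟨s(u, v), huv⟩)).Reachable u v} := by
  refine measureReal_congr ?_
  filter_upwards [ae_exists_mem_mstEvent hG s] with w ⟨T, hw⟩
  refine propext ⟨?_, fun hreach => ?_⟩
  · rintro ⟨T', hT', hmin, hmem⟩
    exact (mem_iff_not_reachable_lighterGraph ⟨hT', hmin⟩ huv).1 hmem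
  · exact ⟨T, hw.1, hw.2, (mem_iff_not_reachable_lighterGraph hw huv).2 hreach⟩

end Measure

theorem monotonicity_interval_sliding_general [Fintype V] {G : SimpleGraph V} (hG : G.Connected)
    {s s' : G.edgeSet → ℝ} {j : G.edgeSet} (hj : s' j ≤ s j) (hle : ∀ e ≠ j, s e ≤ s' e) :
    edgeInclusionProb G s j ≤ edgeInclusionProb G s' j := by
  obtain ⟨j, huv⟩ := j
  induction j with | _ u v
  set j : G.edgeSet := ⟨s(u, v), huv⟩
  let N : Set (G.edgeSet → ℝ) := {w | ¬ (lighterGraph G w (w j)).Reachable u v}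
  have hsub : N ⊆ (· + (s' - s)) ⁻¹' N := fun w hw hreach =>
    hw (hreach.mono (lighterGraph_le_lighterGraph (by simpa using hj) (by simpa using hle)))
  have hmeasure : shiftMeasure G s N ≤ shiftMeasure G s' N := calc
    shiftMeasure G s N ≤ shiftMeasure G s ((· + (s' - s)) ⁻¹' N) := measure_mono hsub
    _ ≤ (shiftMeasure G s).map (· + (s' - s)) N := Measure.le_map_apply (by fun_prop) N
    _ = shiftMeasure G s' N := by rw [map_add_right_shiftMeasure, add_sub_cancel]
  rw [edgeInclusionProb_eq_measureReal hG _ huv, edgeInclusionProb_eq_measureReal hG _ huv]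
  exact ENNReal.toReal_mono (measure_ne_top _ _) hmeasure

/-- Monotonicity under interval sliding: sliding the interval of the edge `k` upward by
`t` weakly increases the probability that any other edge `j` belongs to the minimum
spanning tree. -/
theorem monotonicity_interval_sliding [Fintype V] (G : SimpleGraph V) (hG : G.Connected)
    (s : G.edgeSet → ℝ) (k j : G.edgeSet) (hjk : j ≠ k) :
    Monotone fun t : ℝ => edgeInclusionProb G (Function.update s k (s k + t)) j := by
  intro t₁ t₂ ht
  refine monotonicity_interval_sliding_general hG (by simp [hjk]) fun e _ => ?_
  exact Function.update_mono (by gcongr) e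

end RST
end
end

section
/- Let m ≥ 1 and let (X_1, …, X_m) be a non-colliding product measure on ℝ^m. Then there exists a non-colliding product measure (Y_1, …, Y_m) in which each Y_i is a discrete random variable supported on a finite set of at most m! points of ℝ, inducing the same distribution on the symmetric group S_m: for every permutation σ of {1,…,m}, P(X_{σ(1)} < X_{σ(2)} < ⋯ < X_{σ(m)}) = P(Y_{σ(1)} < Y_{σ(2)} < ⋯ < Y_{σ(m)}). -/
open MeasureTheory
open scoped Classical

noncomputable section

namespace RST

/-! Exactly one of the `m!` order events occurs off the collisions, and none on them. Hence a family
is non-colliding if and only if the vector of indicators of these events almost surely lies in the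
hyperplane of `ℝ ^ S_m` where the entries sum to `1`. Conditioning on one coordinate `t` makes the
distribution on `S_m` the mean of a function `g t` with values in that hyperplane for almost every
`t`. In finite dimension such a mean lies in the convex hull, not only in its closure, of the values
of `g` on any set of full measure. By Carathéodory's theorem in the hyperplane, of dimension
`m! - 1`, it is a convex combination of at most `m!` values of `g`, whose weights define a law on at
most `m!` points that can replace the law of the coordinate. Repeat this for each coordinate. -/

section ConvexGeometry

theorem exists_finset_card_le_finrank_of_mem_convexHull {𝕜 E : Type*} [Field 𝕜] [LinearOrder 𝕜]
    [IsStrictOrderedRing 𝕜] [AddCommGroup E] [Module 𝕜 E] [FiniteDimensional 𝕜 E]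
    {s : Set E} {l : Module.Dual 𝕜 E} (hl : ∀ y ∈ s, l y = 1) {x : E} (hx : x ∈ convexHull 𝕜 s) :
    ∃ t : Finset E, ↑t ⊆ s ∧ t.card ≤ Module.finrank 𝕜 E ∧ x ∈ convexHull 𝕜 (t : Set E) := by
  set t := Caratheodory.minCardFinsetOfMemConvexHull hx
  have hts : ↑t ⊆ s := Caratheodory.minCardFinsetOfMemConvexHull_subseteq hx
  refine ⟨t, hts, ?_, Caratheodory.mem_minCardFinsetOfMemConvexHull hx⟩
  obtain ⟨y₀, hy₀⟩ := Caratheodory.minCardFinsetOfMemConvexHull_nonempty hx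
  have hle : vectorSpan 𝕜 (Set.range ((↑) : t → E)) ≤ LinearMap.ker l := by
    rw [Subtype.range_coe, vectorSpan_def, Submodule.span_le]
    rintro _ ⟨y, hy, z, hz, rfl⟩
    simp [hl y (hts hy), hl z (hts hz)]
  have hlt : vectorSpan 𝕜 (Set.range ((↑) : t → E)) < ⊤ := by
    refine lt_of_le_of_lt hle (lt_top_iff_ne_top.2 fun h => one_ne_zero (α := 𝕜) ?_)
    rw [← hl y₀ (hts hy₀), LinearMap.ker_eq_top.1 h, LinearMap.zero_apply]
  calc t.card = Fintype.card t := (Fintype.card_coe t).symm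
    _ ≤ Module.finrank 𝕜 (vectorSpan 𝕜 (Set.range ((↑) : t → E))) + 1 :=
      (Caratheodory.affineIndependent_minCardFinsetOfMemConvexHull hx).card_le_finrank_succ
    _ ≤ Module.finrank 𝕜 E := Submodule.finrank_lt hlt.ne

variable {E : Type*} [NormedAddCommGroup E] [NormedSpace ℝ E] [FiniteDimensional ℝ E]

theorem exists_ne_zero_forall_le_of_notMem_convex {s : Set E} (hs : Convex ℝ s)
    (hne : s.Nonempty) {x : E} (hx : x ∉ s) :
    ∃ l : StrongDual ℝ E, l ≠ 0 ∧ ∀ y ∈ s, l y ≤ l x := by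
  by_cases hint : (interior s).Nonempty
  · exact geometric_hahn_banach_of_nonempty_interior_point hs
      (fun h => hx (interior_subset h)) hint
  have hdir : (affineSpan ℝ s).direction < ⊤ := by
    rwa [lt_top_iff_ne_top, Ne, AffineSubspace.direction_eq_top_iff_of_nonempty
      ((affineSpan_nonempty ℝ).2 hne), ← hs.interior_nonempty_iff_affineSpan_eq_top]
  obtain ⟨l, hl0, hl⟩ := Submodule.exists_le_ker_of_lt_top _ hdir
  have hconst : ∀ y ∈ s, ∀ z ∈ s, l y = l z := fun y hy z hz => by
    have hyz : l (y -ᵥ z) = 0 := hl (AffineSubspace.vsub_mem_direction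
      (subset_affineSpan ℝ s hy) (subset_affineSpan ℝ s hz))
    rwa [vsub_eq_sub, map_sub, sub_eq_zero] at hyz
  obtain ⟨z, hz⟩ := hne
  have hL0 : l.toContinuousLinearMap ≠ 0 := by simpa using hl0
  rcases le_total (l z) (l x) with h | h
  · exact ⟨l.toContinuousLinearMap, hL0, fun y hy => by simpa [hconst y hy z hz] using h⟩
  · exact ⟨-l.toContinuousLinearMap, neg_ne_zero.2 hL0,
      fun y hy => by simpa [hconst y hy z hz] using h⟩

/- If the integral `c` missed `s`, a functional `l` with `l ≤ l c` on `s` would have `l ∘ g = l c`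
almost everywhere, so that `g - c` lives in the hyperplane `ker l`: induct on the dimension. -/
theorem integral_mem_of_convex {Ω : Type*} [MeasurableSpace Ω] {μ : Measure Ω}
    [IsProbabilityMeasure μ] {s : Set E} (hs : Convex ℝ s) {g : Ω → E} (hg : Integrable g μ)
    (hgs : ∀ᵐ ω ∂μ, g ω ∈ s) : ∫ ω, g ω ∂μ ∈ s := by
  induction hn : Module.finrank ℝ E using Nat.strong_induction_on generalizing E with
  | _ n ih =>
    set c := ∫ ω, g ω ∂μ
    by_contra hcs
    obtain ⟨l, hl0, hl⟩ := exists_ne_zero_forall_le_of_notMem_convex hs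
      (hgs.exists.imp' g fun _ => id) hcs
    have hlg : ∀ᵐ ω ∂μ, l (g ω) = l c := by
      refine (integral_eq_iff_of_ae_le (l.integrable_comp hg) (integrable_const _)
        (hgs.mono fun ω hω => hl _ hω)).1 ?_
      rw [l.integral_comp_comm hg, integral_const, probReal_univ, one_smul]
    obtain ⟨P, hP⟩ := Submodule.ClosedComplemented.of_finiteDimensional (𝕜 := ℝ) l.ker
    have hker : Module.finrank ℝ l.ker < n := hn ▸ Submodule.finrank_lt fun h =>
      hl0 (ContinuousLinearMap.coe_injective (LinearMap.ker_eq_top.1 h))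
    have hgc : Integrable (fun ω => g ω - c) μ := hg.sub (integrable_const c)
    have hPmem : ∀ᵐ ω ∂μ, P (g ω - c) ∈ l.ker.subtype ⁻¹' ((fun v => c + v) ⁻¹' s) := by
      filter_upwards [hgs, hlg] with ω hω hlω
      have hmem : g ω - c ∈ l.ker := by simp [hlω]
      simpa [hP ⟨g ω - c, hmem⟩] using hω
    have hzero : ∫ ω, P (g ω - c) ∂μ = 0 := by
      rw [P.integral_comp_comm hgc, integral_sub hg (integrable_const c), integral_const,
        probReal_univ, one_smul, sub_self, map_zero]
    have hmem := ih _ hker ((hs.translate_preimage_right c).linear_preimage l.ker.subtype)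
      (P.integrable_comp hgc) hPmem rfl
    rw [hzero] at hmem
    exact hcs (by simpa using hmem)

end ConvexGeometry

section FiniteSupport

/-- `μ` is carried by a finite set of at most `n` points. -/
def HasSupportCardLE {X : Type*} [MeasurableSpace X] (μ : Measure X) (n : ℕ) : Prop :=
  ∃ S : Finset X, S.card ≤ n ∧ μ ((↑S : Set X)ᶜ) = 0

variable {X E : Type*} [MeasurableSpace X] [MeasurableSingletonClass X]
  [NormedAddCommGroup E] [NormedSpace ℝ E]

theorem exists_measure_integral_eq_of_mem_convexHull [CompleteSpace E] {g : X → E} {S : Finset X}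
    (hinj : Set.InjOn g S) {c : E} (hc : c ∈ convexHull ℝ (g '' S)) :
    ∃ ρ : Measure X, IsProbabilityMeasure ρ ∧ ρ ((↑S : Set X)ᶜ) = 0 ∧ ∫ x, g x ∂ρ = c := by
  rw [← Finset.coe_image, Finset.mem_convexHull'] at hc
  obtain ⟨w, hw0, hw1, hwc⟩ := hc
  rw [Finset.sum_image hinj] at hw1 hwc
  have hw0' : ∀ x ∈ S, 0 ≤ w (g x) := fun x hx => hw0 _ (Finset.mem_image_of_mem g hx)
  refine ⟨∑ x ∈ S, ENNReal.ofReal (w (g x)) • Measure.dirac x, ⟨?_⟩, ?_, ?_⟩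
  · simp [← ENNReal.ofReal_sum_of_nonneg hw0', hw1]
  · simp +contextual
  · rw [integral_finsetSum_measure fun x _ => (integrable_dirac (by simp)).smul_measure (by simp),
      ← hwc]
    refine Finset.sum_congr rfl fun x hx => ?_
    rw [integral_smul_measure, integral_dirac, ENNReal.toReal_ofReal (hw0' x hx)]

theorem exists_hasSupportCardLE_integral_eq [FiniteDimensional ℝ E] {μ : Measure X}
    [IsProbabilityMeasure μ] {g : X → E} (hg : Integrable g μ) {A : Set X} (hA : ∀ᵐ x ∂μ, x ∈ A)
    {l : StrongDual ℝ E} (hl : ∀ x ∈ A, l (g x) = 1) :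
    ∃ ρ : Measure X, IsProbabilityMeasure ρ ∧ HasSupportCardLE ρ (Module.finrank ℝ E) ∧
      (∀ᵐ x ∂ρ, x ∈ A) ∧ ∫ x, g x ∂ρ = ∫ x, g x ∂μ := by
  have hmem : ∫ x, g x ∂μ ∈ convexHull ℝ (g '' A) :=
    integral_mem_of_convex (convex_convexHull ℝ _) hg
      (hA.mono fun x hx => subset_convexHull ℝ _ (Set.mem_image_of_mem g hx))
  obtain ⟨t, htA, htcard, ht⟩ := exists_finset_card_le_finrank_of_mem_convexHull
    (l := l.toLinearMap) (Set.forall_mem_image.2 hl) hmem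
  obtain ⟨S, hSA, hinj, rfl⟩ := Finset.exists_subset_injOn_image_eq_of_surjOn A t htA
  rw [Finset.coe_image] at ht
  have : CompleteSpace E := FiniteDimensional.complete ℝ E
  obtain ⟨ρ, hρ, hρS, hint⟩ := exists_measure_integral_eq_of_mem_convexHull hinj ht
  exact ⟨ρ, hρ, ⟨S, (Finset.card_image_of_injOn hinj).symm.trans_le htcard, hρS⟩,
    Filter.mem_of_superset (mem_ae_iff.2 hρS) hSA, hint⟩

end FiniteSupport

section ProductMeasure

variable {ι : Type*} {X : ι → Type*} [∀ i, MeasurableSpace (X i)]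

section Update

variable [DecidableEq ι]

theorem isProbabilityMeasure_update (ν : ∀ i, Measure (X i)) [∀ i, IsProbabilityMeasure (ν i)]
    (i : ι) (ρ : Measure (X i)) [IsProbabilityMeasure ρ] (j : ι) :
    IsProbabilityMeasure (Function.update ν i ρ j) :=
  (Function.forall_update_iff ν (p := fun _ μ => IsProbabilityMeasure μ)).2
    ⟨inferInstance, fun _ _ => inferInstance⟩ j

variable [Fintype ι]

theorem measurePreserving_update (ν : ∀ i, Measure (X i)) [∀ i, IsProbabilityMeasure (ν i)]
    (i : ι) (ρ : Measure (X i)) [IsProbabilityMeasure ρ] :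
    MeasurePreserving (fun p : X i × (∀ j, X j) => Function.update p.2 i p.1)
      (ρ.prod (Measure.pi ν)) (Measure.pi (Function.update ν i ρ)) := by
  have := isProbabilityMeasure_update ν i ρ
  have hmeas : Measurable fun p : X i × (∀ j, X j) => Function.update p.2 i p.1 :=
    measurable_update'.comp measurable_swap
  refine ⟨hmeas, (Measure.pi_eq fun s hs => ?_).symm⟩
  have hpre : (fun p : X i × (∀ j, X j) => Function.update p.2 i p.1) ⁻¹' Set.univ.pi s =
      s i ×ˢ Set.univ.pi (Function.update s i Set.univ) := by
    ext ⟨x, y⟩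
    simp [Function.forall_update_iff y (p := fun j z => z ∈ s j),
      Function.forall_update_iff s (p := fun j t => y j ∈ t)]
  rw [Measure.map_apply hmeas (MeasurableSet.univ_pi hs), hpre, Measure.prod_prod, Measure.pi_pi,
    ← Finset.mul_prod_erase _ _ (Finset.mem_univ i),
    ← Finset.mul_prod_erase _ (fun j => Function.update ν i ρ j (s j)) (Finset.mem_univ i)]
  simp only [Function.update_self, measure_univ, one_mul]
  congr 1
  refine Finset.prod_congr rfl fun j hj => ?_
  have hji : j ≠ i := Finset.ne_of_mem_erase hj
  rw [Function.update_of_ne hji, Function.update_of_ne hji]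

theorem ae_pi_update_iff (ν : ∀ i, Measure (X i)) [∀ i, IsProbabilityMeasure (ν i)]
    (i : ι) (ρ : Measure (X i)) [IsProbabilityMeasure ρ] {p : (∀ j, X j) → Prop}
    (hp : MeasurableSet {x | p x}) :
    (∀ᵐ x ∂Measure.pi (Function.update ν i ρ), p x) ↔
      ∀ᵐ t ∂ρ, ∀ᵐ y ∂Measure.pi ν, p (Function.update y i t) := by
  have hmp := measurePreserving_update ν i ρ
  rw [← hmp.map_eq, ae_map_iff hmp.aemeasurable hp]
  exact Measure.ae_prod_iff_ae_ae (hmp.measurable hp)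

theorem integral_pi_update {E : Type*} [NormedAddCommGroup E] [NormedSpace ℝ E]
    (ν : ∀ i, Measure (X i)) [∀ i, IsProbabilityMeasure (ν i)] (i : ι) (ρ : Measure (X i))
    [IsProbabilityMeasure ρ] {f : (∀ j, X j) → E}
    (hf : Integrable f (Measure.pi (Function.update ν i ρ))) :
    ∫ x, f x ∂Measure.pi (Function.update ν i ρ) =
      ∫ t, ∫ y, f (Function.update y i t) ∂Measure.pi ν ∂ρ := by
  have hmp := measurePreserving_update ν i ρ
  rw [← integral_prod (fun p : X i × (∀ j, X j) => f (Function.update p.2 i p.1))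
    (hmp.integrable_comp_of_integrable hf), ← hmp.map_eq, integral_map hmp.aemeasurable]
  rw [hmp.map_eq]
  exact hf.aestronglyMeasurable

theorem exists_pi_update_integral_eq [∀ i, MeasurableSingletonClass (X i)] {E : Type*}
    [NormedAddCommGroup E] [NormedSpace ℝ E] [FiniteDimensional ℝ E]
    (ν : ∀ i, Measure (X i)) [∀ i, IsProbabilityMeasure (ν i)] (i : ι) {f : (∀ j, X j) → E}
    (hf : StronglyMeasurable f) {C : ℝ} (hC : ∀ x, ‖f x‖ ≤ C) {l : StrongDual ℝ E}
    (hl : ∀ᵐ x ∂Measure.pi ν, l (f x) = 1) :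
    ∃ ρ : Measure (X i), IsProbabilityMeasure ρ ∧ HasSupportCardLE ρ (Module.finrank ℝ E) ∧
      (∀ᵐ x ∂Measure.pi (Function.update ν i ρ), l (f x) = 1) ∧
      ∫ x, f x ∂Measure.pi (Function.update ν i ρ) = ∫ x, f x ∂Measure.pi ν := by
  have hint (ρ : Measure (X i)) [IsProbabilityMeasure ρ] :
      Integrable f (Measure.pi (Function.update ν i ρ)) := by
    have := isProbabilityMeasure_update ν i ρ
    exact .of_bound hf.aestronglyMeasurable C (.of_forall hC)
  have hlmeas : MeasurableSet {x | l (f x) = 1} :=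
    (l.continuous.comp_stronglyMeasurable hf).measurableSet_eq_fun stronglyMeasurable_const
  set A : Set (X i) := {t | ∀ᵐ y ∂Measure.pi ν, l (f (Function.update y i t)) = 1}
  set g : X i → E := fun t => ∫ y, f (Function.update y i t) ∂Measure.pi ν
  have hA : ∀ᵐ t ∂ν i, t ∈ A :=
    (ae_pi_update_iff ν i (ν i) hlmeas).1 (by rwa [Function.update_eq_self])
  have hg : Integrable g (ν i) :=
    ((measurePreserving_update ν i (ν i)).integrable_comp_of_integrable
      (hint (ν i))).integral_prod_left
  have hlg : ∀ t ∈ A, l (g t) = 1 := fun t ht => by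
    have hft : Integrable (fun y => f (Function.update y i t)) (Measure.pi ν) :=
      .of_bound (hf.comp_measurable measurable_update_left).aestronglyMeasurable C
        (.of_forall fun _ => hC _)
    rw [← l.integral_comp_comm hft, integral_congr_ae ht, integral_const, probReal_univ, one_smul]
  obtain ⟨ρ, hρ, hsupp, hρA, hρg⟩ := exists_hasSupportCardLE_integral_eq hg hA hlg
  refine ⟨ρ, hρ, hsupp, (ae_pi_update_iff ν i ρ hlmeas).2 hρA, ?_⟩
  rw [integral_pi_update ν i ρ (hint ρ), hρg, ← integral_pi_update ν i (ν i) (hint (ν i)),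
    Function.update_eq_self]

end Update

theorem exists_pi_hasSupportCardLE_integral_eq [Fintype ι] [∀ i, MeasurableSingletonClass (X i)]
    {E : Type*} [NormedAddCommGroup E] [NormedSpace ℝ E] [FiniteDimensional ℝ E]
    (ν : ∀ i, Measure (X i)) [∀ i, IsProbabilityMeasure (ν i)] {f : (∀ j, X j) → E}
    (hf : StronglyMeasurable f) {C : ℝ} (hC : ∀ x, ‖f x‖ ≤ C) {l : StrongDual ℝ E}
    (hl : ∀ᵐ x ∂Measure.pi ν, l (f x) = 1) :
    ∃ ν' : ∀ i, Measure (X i), (∀ i, IsProbabilityMeasure (ν' i)) ∧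
      (∀ i, HasSupportCardLE (ν' i) (Module.finrank ℝ E)) ∧
      (∀ᵐ x ∂Measure.pi ν', l (f x) = 1) ∧
      ∫ x, f x ∂Measure.pi ν' = ∫ x, f x ∂Measure.pi ν := by
  suffices h : ∀ s : Finset ι, ∃ ν' : ∀ i, Measure (X i), (∀ i, IsProbabilityMeasure (ν' i)) ∧
      (∀ i ∈ s, HasSupportCardLE (ν' i) (Module.finrank ℝ E)) ∧
      (∀ᵐ x ∂Measure.pi ν', l (f x) = 1) ∧
      ∫ x, f x ∂Measure.pi ν' = ∫ x, f x ∂Measure.pi ν by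
    simpa using h Finset.univ
  intro s
  induction s using Finset.induction_on with
  | empty => exact ⟨ν, inferInstance, by simp, hl, rfl⟩
  | insert i s _ ih =>
    obtain ⟨ν', hν', hsupp, hl', hint⟩ := ih
    obtain ⟨ρ, hρ, hρsupp, hρl, hρint⟩ := exists_pi_update_integral_eq ν' i hf hC hl'
    refine ⟨Function.update ν' i ρ, isProbabilityMeasure_update ν' i ρ, ?_, hρl,
      hρint.trans hint⟩
    refine (Function.forall_update_iff ν'
      (p := fun j μ => j ∈ insert i s → HasSupportCardLE μ (Module.finrank ℝ E))).2
      ⟨fun _ => hρsupp, fun j hji hj => hsupp j (Finset.mem_of_mem_insert_of_ne hj hji)⟩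

end ProductMeasure

section Order

theorem ae_injective_iff {ι α : Type*} [Countable ι] [MeasurableSpace α] {μ : Measure (ι → α)} :
    (∀ᵐ x ∂μ, Function.Injective x) ↔ ∀ i j, i ≠ j → μ {x | x i = x j} = 0 := by
  have hinj (x : ι → α) : Function.Injective x ↔ ∀ i j, i ≠ j → x i ≠ x j :=
    Function.injective_iff_pairwise_ne
  simp_rw [hinj, ae_all_iff, ae_iff, not_not]

/-- The event that the coordinates of a point of `α ^ m` increase strictly along `σ`. -/
def orderEvent (α : Type*) [Preorder α] {m : ℕ} (σ : Equiv.Perm (Fin m)) : Set (Fin m → α) :=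
  {x | StrictMono fun i => x (σ i)}

variable {α : Type*} [LinearOrder α] {m : ℕ}

/-- The vector of indicators of the events `orderEvent α σ`; its expectation is the distribution
induced on permutations, and its entries sum to `1` exactly off the collisions. -/
def orderVector (x : Fin m → α) (σ : Equiv.Perm (Fin m)) : ℝ :=
  (orderEvent α σ).indicator 1 x

theorem mem_orderEvent_iff {σ : Equiv.Perm (Fin m)} {x : Fin m → α} :
    x ∈ orderEvent α σ ↔ Function.Injective x ∧ σ = Tuple.sort x := by
  constructor
  · intro (hx : StrictMono (x ∘ σ))
    have hinj : Function.Injective x := (σ.injective_comp x).1 hx.injective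
    refine ⟨hinj, Equiv.coe_fn_injective <| hinj.comp_left ?_⟩
    exact Tuple.comp_sort_eq_comp_iff_monotone.2 hx.monotone
  · rintro ⟨hx, rfl⟩
    exact (Tuple.monotone_sort x).strictMono_of_injective (hx.comp (Equiv.injective _))

theorem sum_orderVector_eq_one_iff {x : Fin m → α} :
    ∑ σ, orderVector x σ = 1 ↔ Function.Injective x := by
  by_cases hx : Function.Injective x <;>
    simp [orderVector, Set.indicator_apply, mem_orderEvent_iff, hx]

theorem norm_orderVector_le_one (x : Fin m → α) : ‖orderVector x‖ ≤ 1 :=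
  (pi_norm_le_iff_of_nonneg zero_le_one).2 fun σ => by
    simpa [orderVector] using norm_indicator_le_norm_self (1 : (Fin m → α) → ℝ) x

variable [TopologicalSpace α] [OrderClosedTopology α] [SecondCountableTopology α]
  [MeasurableSpace α] [OpensMeasurableSpace α]

theorem measurableSet_orderEvent (σ : Equiv.Perm (Fin m)) :
    MeasurableSet (orderEvent α σ) := by
  simp only [orderEvent, StrictMono, Set.ofPred_forall]
  exact .iInter fun _ => .iInter fun _ => .iInter fun _ =>
    measurableSet_lt (measurable_pi_apply _) (measurable_pi_apply _)

theorem measurable_orderVector : Measurable (orderVector : (Fin m → α) → _) :=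
  measurable_pi_iff.2 fun σ => measurable_one.indicator (measurableSet_orderEvent σ)

theorem integral_orderVector_apply (μ : Measure (Fin m → α)) [IsFiniteMeasure μ]
    (σ : Equiv.Perm (Fin m)) : (∫ x, orderVector x ∂μ) σ = μ.real (orderEvent α σ) := by
  have hint (τ : Equiv.Perm (Fin m)) : Integrable (fun x : Fin m → α => orderVector x τ) μ :=
    (integrable_const (1 : ℝ)).indicator (measurableSet_orderEvent τ)
  rw [eval_integral hint]
  exact integral_indicator_one (measurableSet_orderEvent σ)

theorem discrete_product_measures_suffice_general (ν : Fin m → Measure α)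
    [∀ i, IsProbabilityMeasure (ν i)]
    (hnc : ∀ i j : Fin m, i ≠ j → Measure.pi ν {x | x i = x j} = 0) :
    ∃ ν' : Fin m → Measure α,
      (∀ i, IsProbabilityMeasure (ν' i)) ∧
      (∀ i j : Fin m, i ≠ j → Measure.pi ν' {x | x i = x j} = 0) ∧
      (∀ i, ∃ S : Finset α, S.card ≤ Nat.factorial m ∧ ν' i ((↑S : Set α)ᶜ) = 0) ∧
      ∀ σ : Equiv.Perm (Fin m),
        Measure.pi ν {x | StrictMono fun i => x (σ i)} =
          Measure.pi ν' {x | StrictMono fun i => x (σ i)} := by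
  let l : StrongDual ℝ (Equiv.Perm (Fin m) → ℝ) := ∑ σ, ContinuousLinearMap.proj σ
  have hl (x : Fin m → α) : l (orderVector x) = 1 ↔ Function.Injective x := by
    simp [l, ← sum_orderVector_eq_one_iff]
  obtain ⟨ν', hν', hsupp, hl', hint⟩ := exists_pi_hasSupportCardLE_integral_eq ν
    measurable_orderVector.stronglyMeasurable norm_orderVector_le_one (l := l)
    (by simpa only [hl, ae_injective_iff] using hnc)
  refine ⟨ν', hν', by simpa only [hl, ae_injective_iff] using hl', fun i => ?_, fun σ => ?_⟩
  · simpa [HasSupportCardLE, Fintype.card_perm] using hsupp i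
  · change Measure.pi ν (orderEvent α σ) = Measure.pi ν' (orderEvent α σ)
    rw [← measureReal_eq_measureReal_iff]
    simpa only [integral_orderVector_apply] using congrFun hint.symm σ

end Order

/-- Bounded-support discrete product measures suffice: given a non-colliding product
measure `ν` on `ℝ^m` (`m` independent coordinates, ties having probability zero), there
is a non-colliding product measure `ν'` each of whose coordinates is supported on a
finite set of at most `m!` points, inducing the same distribution on the symmetric
group: for every permutation `σ`, the probability that the coordinates occur in
increasing order along `σ` is the same for `ν` and `ν'`. -/
theorem discrete_product_measures_suffice (m : ℕ) (hm : 1 ≤ m)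
    (ν : Fin m → Measure ℝ) (hprob : ∀ i, IsProbabilityMeasure (ν i))
    (hnc : ∀ i j : Fin m, i ≠ j → Measure.pi ν {x | x i = x j} = 0) :
    ∃ ν' : Fin m → Measure ℝ,
      (∀ i, IsProbabilityMeasure (ν' i)) ∧
      (∀ i j : Fin m, i ≠ j → Measure.pi ν' {x | x i = x j} = 0) ∧
      (∀ i, ∃ S : Finset ℝ, S.card ≤ Nat.factorial m ∧ ν' i ((↑S : Set ℝ)ᶜ) = 0) ∧
      ∀ σ : Equiv.Perm (Fin m),
        Measure.pi ν {x | StrictMono fun i => x (σ i)} =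
          Measure.pi ν' {x | StrictMono fun i => x (σ i)} :=
  discrete_product_measures_suffice_general ν hnc

end RST
end
end

section
/- Let k ≥ 1, let x_1, …, x_r ∈ [0,1] and α_1, …, α_r ≥ 0 with ∑_{i=1}^r α_i = 1, and suppose ∑_{i=1}^r α_i p(x_i) = ∫_0^1 p(x) dx for every real polynomial p of degree at most k (a degree-k quadrature scheme). Let U_1, …, U_k be i.i.d. uniform random variables on [0,1] and let Y be an independent random variable with law ∑_{i=1}^r α_i δ_{x_i}. Then for every j ∈ {0, 1, …, k}, the probability that exactly j of the variables U_1, …, U_k are less than Y equals 1/(k+1). -/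
/-!
Conditionally on `Y = y`, the number of `Uᵢ` less than `y` is binomial with parameters `k` and `y`,
so it equals `j` with probability `B(y)`, where `B` is the `j`-th Bernstein polynomial of degree
`k`. Averaging over `Y` is exact for polynomials of degree at most `k`, hence gives `∫₀¹ B`.
This integral does not depend on `j`, because the difference of two consecutive Bernstein
polynomials of degree `k` is, up to a factor, the derivative of a Bernstein polynomial of degree
`k + 1` that vanishes at both endpoints.
-/

open MeasureTheory
open scoped Classical ENNReal

noncomputable section

namespace RST

open scoped Finset Polynomial

theorem natDegree_bernsteinPolynomial_le (R : Type*) [CommRing R] (n j : ℕ) :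
    (bernsteinPolynomial R n j).natDegree ≤ n := by
  obtain hj | hj := le_or_gt j n
  · calc
      (bernsteinPolynomial R n j).natDegree ≤ 0 + j * 1 + (n - j) * 1 := by
        unfold bernsteinPolynomial
        compute_degree
        simp
      _ = n := by omega
  · simp [bernsteinPolynomial.eq_zero_of_lt R hj]

theorem intervalIntegrable_eval (p : ℝ[X]) (a b : ℝ) :
    IntervalIntegrable (fun t => p.eval t) volume a b :=
  p.continuous.intervalIntegrable a b

theorem integral_eval_derivative (p : ℝ[X]) (a b : ℝ) :
    ∫ t in a..b, p.derivative.eval t = p.eval b - p.eval a :=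
  intervalIntegral.integral_eq_sub_of_hasDerivAt (fun t _ => p.hasDerivAt t)
    (intervalIntegrable_eval p.derivative a b)

theorem integral_bernsteinPolynomial_succ {n j : ℕ} (hj : j < n) :
    ∫ t in (0 : ℝ)..1, (bernsteinPolynomial ℝ n (j + 1)).eval t =
      ∫ t in (0 : ℝ)..1, (bernsteinPolynomial ℝ n j).eval t := by
  have integral_derivative_eq_zero : ∫ t in (0 : ℝ)..1,
      (bernsteinPolynomial ℝ (n + 1) (j + 1)).derivative.eval t = 0 := by
    simp [integral_eval_derivative, bernsteinPolynomial.eval_at_0, bernsteinPolynomial.eval_at_1,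
      hj.ne]
  have difference_eq_zero : (n + 1 : ℝ) *
      ((∫ t in (0 : ℝ)..1, (bernsteinPolynomial ℝ n j).eval t) -
        ∫ t in (0 : ℝ)..1, (bernsteinPolynomial ℝ n (j + 1)).eval t) = 0 := by
    simpa only [bernsteinPolynomial.derivative_succ, Nat.add_sub_cancel, Nat.cast_add,
      Nat.cast_one, Polynomial.eval_mul, Polynomial.eval_add, Polynomial.eval_natCast,
      Polynomial.eval_one, Polynomial.eval_sub, intervalIntegral.integral_const_mul,
      intervalIntegral.integral_sub, intervalIntegrable_eval] using integral_derivative_eq_zero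
  have succ_ne_zero : (n + 1 : ℝ) ≠ 0 := by positivity
  exact (sub_eq_zero.1 ((mul_eq_zero.1 difference_eq_zero).resolve_left succ_ne_zero)).symm

theorem integral_bernsteinPolynomial {n j : ℕ} (hj : j ≤ n) :
    ∫ t in (0 : ℝ)..1, (bernsteinPolynomial ℝ n j).eval t = ((n : ℝ) + 1)⁻¹ := by
  induction hj using Nat.decreasingInduction with
  | self => simp [bernsteinPolynomial]
  | of_succ m hm ih => rw [← integral_bernsteinPolynomial_succ hm, ih]

section Counting

variable {ι : Type*} [Fintype ι]

theorem measurableSet_card_filter_eq {β : Type*} [MeasurableSpace β] {p : ι → β → Prop}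
    [∀ b, DecidablePred fun i => p i b] (hp : ∀ i, MeasurableSet {b | p i b}) (j : ℕ) :
    MeasurableSet {b | #{i | p i b} = j} := by
  have measurable_card : Measurable fun b => #{i | p i b} := by
    simp only [Finset.card_filter]
    exact Finset.measurable_sum _ fun i _ => Measurable.ite (hp i) measurable_const measurable_const
  exact measurable_card (measurableSet_singleton j)

theorem ofPred_filter_mem_eq {Ω : ι → Type*} (s : ∀ i, Set (Ω i))
    [∀ u : ∀ i, Ω i, DecidablePred fun i => u i ∈ s i] (T : Finset ι) :
    {u : ∀ i, Ω i | ({i | u i ∈ s i} : Finset ι) = T} =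
      Set.univ.pi fun i => if i ∈ T then s i else (s i)ᶜ := by
  ext u
  simp only [Set.mem_ofPred_eq, Finset.ext_iff, Finset.mem_filter_univ, Set.mem_univ_pi]
  refine forall_congr' fun i => ?_
  by_cases hi : i ∈ T <;> simp [hi]

theorem pi_filter_mem_eq {Ω : ι → Type*} [∀ i, MeasurableSpace (Ω i)]
    (μ : ∀ i, Measure (Ω i)) [∀ i, SigmaFinite (μ i)] (s : ∀ i, Set (Ω i))
    [∀ u : ∀ i, Ω i, DecidablePred fun i => u i ∈ s i] (T : Finset ι) :
    Measure.pi μ {u | ({i | u i ∈ s i} : Finset ι) = T} =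
      (∏ i ∈ T, μ i (s i)) * ∏ i ∈ Tᶜ, μ i (s i)ᶜ := by
  simp only [ofPred_filter_mem_eq, Measure.pi_pi, apply_ite, Finset.prod_ite]
  simp [Finset.filter_notMem_eq_sdiff, Finset.compl_eq_univ_sdiff]

theorem pi_card_filter_mem_eq {Ω : Type*} [MeasurableSpace Ω] (μ : Measure Ω) [SigmaFinite μ]
    {s : Set Ω} [DecidablePred (· ∈ s)] (hs : MeasurableSet s) (j : ℕ) :
    Measure.pi (fun _ : ι => μ) {u | #{i | u i ∈ s} = j} =
      (Fintype.card ι).choose j * (μ s ^ j * μ sᶜ ^ (Fintype.card ι - j)) := by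
  let hits (u : ι → Ω) : Finset ι := {i | u i ∈ s}
  have measurableSet_fiber (T : Finset ι) : MeasurableSet (hits ⁻¹' {T}) := by
    have fiber_eq : hits ⁻¹' {T} = Set.univ.pi fun i => if i ∈ T then s else sᶜ :=
      ofPred_filter_mem_eq (fun _ => s) T
    rw [fiber_eq]
    refine MeasurableSet.univ_pi fun i => ?_
    split_ifs
    exacts [hs, hs.compl]
  calc
    Measure.pi (fun _ : ι => μ) {u | #{i | u i ∈ s} = j}
      = Measure.pi (fun _ => μ) (hits ⁻¹' (Finset.univ.powersetCard j : Finset (Finset ι))) := by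
        congr 1
        ext u
        simp [hits]
    _ = ∑ T ∈ Finset.univ.powersetCard j, Measure.pi (fun _ => μ) (hits ⁻¹' {T}) :=
        (sum_measure_preimage_singleton _ fun _ _ => measurableSet_fiber _).symm
    _ = ∑ _ ∈ (Finset.univ : Finset ι).powersetCard j, μ s ^ j * μ sᶜ ^ (Fintype.card ι - j) := by
        refine Finset.sum_congr rfl fun T hT => ?_
        have card_eq : #T = j := (Finset.mem_powersetCard.1 hT).2
        refine (pi_filter_mem_eq (fun _ => μ) (fun _ => s) T).trans ?_
        simp [Finset.card_compl, card_eq]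
    _ = (Fintype.card ι).choose j * (μ s ^ j * μ sᶜ ^ (Fintype.card ι - j)) := by
        simp [Finset.card_powersetCard]

theorem volume_restrict_Icc_Iio {a b y : ℝ} (hy : y ≤ b) :
    volume.restrict (Set.Icc a b) (Set.Iio y) = ENNReal.ofReal (y - a) := by
  have inter_eq : Set.Iio y ∩ Set.Icc a b = Set.Ico a y := by grind
  rw [Measure.restrict_apply measurableSet_Iio, inter_eq, Real.volume_Ico]

theorem volume_restrict_Icc_Ici {a b y : ℝ} (hy : a ≤ y) :
    volume.restrict (Set.Icc a b) (Set.Ici y) = ENNReal.ofReal (b - y) := by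
  have inter_eq : Set.Ici y ∩ Set.Icc a b = Set.Icc y b := by grind
  rw [Measure.restrict_apply measurableSet_Ici, inter_eq, Real.volume_Icc]

theorem pi_restrict_Icc_card_lt_eq {y : ℝ} (hy : y ∈ Set.Icc (0 : ℝ) 1) (j : ℕ) :
    Measure.pi (fun _ : ι => (volume : Measure ℝ).restrict (Set.Icc 0 1)) {u | #{i | u i < y} = j} =
      ENNReal.ofReal ((bernsteinPolynomial ℝ (Fintype.card ι) j).eval y) := by
  have one_sub_nonneg : 0 ≤ 1 - y := sub_nonneg.2 hy.2
  have y_nonneg : 0 ≤ y := hy.1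
  have binomial := pi_card_filter_mem_eq (ι := ι)
    ((volume : Measure ℝ).restrict (Set.Icc 0 1)) (measurableSet_Iio (a := y)) j
  simp only [Set.mem_Iio, Set.compl_Iio, volume_restrict_Icc_Iio hy.2,
    volume_restrict_Icc_Ici hy.1, sub_zero] at binomial
  rw [binomial]
  simp [bernsteinPolynomial, ENNReal.ofReal_mul, ENNReal.ofReal_pow, mul_assoc, y_nonneg,
    one_sub_nonneg]

end Counting

/-- A degree-`k` quadrature scheme on `[0,1]`, for an arbitrary rather than a finitely supported
measure `ν`. The case `p = 1` of `integral_eval_eq` says that `ν` has total mass one, so `ν` is a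
probability measure and none of these Bochner integrals takes the junk value `0`. -/
structure IsQuadrature (k : ℕ) (ν : Measure ℝ) : Prop where
  ae_mem_Icc : ∀ᵐ y ∂ν, y ∈ Set.Icc (0 : ℝ) 1
  integral_eval_eq : ∀ p : ℝ[X], p.natDegree ≤ k →
    ∫ y, p.eval y ∂ν = ∫ t in (0 : ℝ)..1, p.eval t

namespace IsQuadrature

variable {k : ℕ} {ν : Measure ℝ}

theorem isProbabilityMeasure (hν : IsQuadrature k ν) : IsProbabilityMeasure ν := by
  have real_univ : ν.real Set.univ = 1 := by simpa using hν.integral_eval_eq 1 (by simp)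
  exact ⟨(ENNReal.toReal_eq_one_iff _).1 real_univ⟩

theorem integrable_of_continuous (hν : IsQuadrature k ν) {f : ℝ → ℝ} (hf : Continuous f) :
    Integrable f ν := by
  have := hν.isProbabilityMeasure
  rw [← Measure.restrict_eq_self_of_ae_mem hν.ae_mem_Icc]
  exact hf.integrableOn_Icc

theorem lintegral_bernsteinPolynomial (hν : IsQuadrature k ν) {j : ℕ} (hj : j ≤ k) :
    ∫⁻ y, ENNReal.ofReal ((bernsteinPolynomial ℝ k j).eval y) ∂ν = ((k : ℝ≥0∞) + 1)⁻¹ := by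
  have eval_nonneg : ∀ᵐ y ∂ν, 0 ≤ (bernsteinPolynomial ℝ k j).eval y := by
    filter_upwards [hν.ae_mem_Icc] with y hy
    exact bernstein_nonneg (n := k) (ν := j) (x := ⟨y, hy⟩)
  rw [← ofReal_integral_eq_lintegral_ofReal
      (hν.integrable_of_continuous (Polynomial.continuous _)) eval_nonneg,
    hν.integral_eval_eq _ (natDegree_bernsteinPolynomial_le ℝ k j),
    integral_bernsteinPolynomial hj, ENNReal.ofReal_inv_of_pos (by positivity),
    ENNReal.ofReal_add (by positivity) zero_le_one, ENNReal.ofReal_natCast, ENNReal.ofReal_one]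

end IsQuadrature

theorem isQuadrature_sum_dirac {ι : Type*} [Fintype ι] {k : ℕ} {x α : ι → ℝ}
    (hx : ∀ i, x i ∈ Set.Icc (0 : ℝ) 1) (hα : ∀ i, 0 ≤ α i)
    (hquad : ∀ p : ℝ[X], p.natDegree ≤ k →
      ∑ i, α i * p.eval (x i) = ∫ t in (0 : ℝ)..1, p.eval t) :
    IsQuadrature k (∑ i, ENNReal.ofReal (α i) • Measure.dirac (x i)) where
  ae_mem_Icc := by
    refine ae_finsetSum_measure_iff.2 fun i _ => Measure.ae_smul_measure ?_ _
    simpa [ae_dirac_eq] using hx i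
  integral_eval_eq p hp := by
    rw [← hquad p hp, integral_finsetSum_measure fun i _ =>
      (integrable_dirac enorm_lt_top).smul_measure ENNReal.ofReal_ne_top]
    simp [hα]

theorem quadrature_uniform_rank_general {ι : Type*} [Fintype ι] {ν : Measure ℝ}
    (hν : IsQuadrature (Fintype.card ι) ν) {j : ℕ} (hj : j ≤ Fintype.card ι) :
    ((Measure.pi fun _ : ι => (volume : Measure ℝ).restrict (Set.Icc 0 1)).prod ν)
      {q : (ι → ℝ) × ℝ | #{i | q.1 i < q.2} = j} = ((Fintype.card ι : ℝ≥0∞) + 1)⁻¹ := by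
  have := hν.isProbabilityMeasure
  have measurableSet_rank : MeasurableSet {q : (ι → ℝ) × ℝ | #{i | q.1 i < q.2} = j} :=
    measurableSet_card_filter_eq (fun i => measurableSet_lt (by fun_prop) (by fun_prop)) j
  rw [Measure.prod_apply_symm measurableSet_rank, ← hν.lintegral_bernsteinPolynomial hj]
  refine lintegral_congr_ae ?_
  filter_upwards [hν.ae_mem_Icc] with y hy
  exact pi_restrict_Icc_card_lt_eq hy j

/-- Quadrature condition: if `∑ αᵢ δ_{xᵢ}` is a degree-`k` quadrature scheme on `[0,1]`
(with `k ≥ 1`), `U₁, …, U_k` are i.i.d. uniform on `[0,1]` and `Y` is an independent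
draw from `∑ αᵢ δ_{xᵢ}`, then for every `j ∈ {0, …, k}`, the probability that exactly
`j` of the `Uᵢ` are less than `Y` equals `1/(k+1)`. -/
theorem quadrature_uniform_rank (k r : ℕ) (hk : 1 ≤ k)
    (x : Fin r → ℝ) (hx : ∀ i, x i ∈ Set.Icc (0 : ℝ) 1)
    (α : Fin r → ℝ) (hα0 : ∀ i, 0 ≤ α i) (hα1 : ∑ i, α i = 1)
    (hquad : ∀ p : Polynomial ℝ, p.natDegree ≤ k →
      ∑ i, α i * p.eval (x i) = ∫ t in (0 : ℝ)..1, p.eval t)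
    (j : ℕ) (hj : j ≤ k) :
    ((Measure.pi fun _ : Fin k => (volume : Measure ℝ).restrict (Set.Icc (0 : ℝ) 1)).prod
        (∑ i, ENNReal.ofReal (α i) • Measure.dirac (x i)))
      {q : (Fin k → ℝ) × ℝ | (Finset.univ.filter fun i : Fin k => q.1 i < q.2).card = j}
      = ((k : ℝ≥0∞) + 1)⁻¹ := by
  simpa only [Fintype.card_fin] using quadrature_uniform_rank_general (ι := Fin k)
    (by simpa only [Fintype.card_fin] using isQuadrature_sum_dirac hx hα0 hquad) (by simpa using hj)

end RST
end
end
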